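/- One-step conditional variance remainder bound (Lemma 3.1, item 4(b)). Under the one-step setup, assume in addition E[YYᵀ] = Λ. Define H∘ := var∘(Y̲Ȳᵀ) and R∘ := var∘(T⁺ − T) − η²·H∘. Then ‖R∘‖₂ ≤ 2·ν₁·ν^{1/2}·λ_{1∼p}²·μ²·η²·τ·(1 + (1 + ν₁ν^{−1/2})·τ + τ² + τ³/2) + 8·ν·λ_{1∼p}³·μ³·η³·(1+τ²)^{1/2}·(1 + τ² + ν₁ν^{−1/2}·τ)². -/

import Mathlib

open MeasureTheory Matrix

/-- Spectral norm (ℓ²-operator norm) of a real matrix. -/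
noncomputable def specNorm {m n : ℕ} (A : Matrix (Fin m) (Fin n) ℝ) : ℝ :=
  sSup {c : ℝ | ∃ x : Fin n → ℝ, ∑ j, x j ^ 2 ≤ 1 ∧ c = Real.sqrt (∑ i, (A.mulVec x) i ^ 2)}

/-- Top `p×p` block of a `d×p` matrix. -/
def topBlock {d p : ℕ} (h : p ≤ d) (X : Matrix (Fin d) (Fin p) ℝ) :
    Matrix (Fin p) (Fin p) ℝ :=
  Matrix.of fun i j => X (Fin.castLE h i) j

/-- Bottom `(d−p)×p` block of a `d×p` matrix. -/
def botBlock {d p : ℕ} (X : Matrix (Fin d) (Fin p) ℝ) :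
    Matrix (Fin (d - p)) (Fin p) ℝ :=
  Matrix.of fun i j => X ⟨p + i, by have := i.isLt; omega⟩ j

/-!
Write `u = ȳ`, `b = y̲` and `z = Vᵀy`. Both blocks of `V` change by a rank-one matrix with the same
row `zᵀ`, so by the Sherman–Morrison formula
`T⁺ − T = η (1 + ξ)⁻¹ (b − T u)(u + Tᵀ b)ᵀ` with `ξ = η zᵀ V̄⁻¹ u`.
For `T = 0` and `ξ = 0` this is `η b uᵀ`, whose Hadamard variance is `η² H∘`; the remainder measures
the effect of replacing `b uᵀ` by `(b − T u)(u + Tᵀ b)ᵀ` and then of dividing by `1 + ξ`. Both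
replacements are controlled by one inequality: if `‖X‖ ≤ a` and `‖Z‖ ≤ b` almost surely, then the
Hadamard covariance of `X` and `Z` has norm at most `a b`, by the Cauchy–Schwarz inequality for each
entry and Schur's test, since the rows of `X` and the columns of `Z` have norms at most `a` and `b`.
-/

open ProbabilityTheory
open WithLp (toLp)
open scoped Matrix.Norms.L2Operator

section OperatorNorm

lemma specNorm_eq_l2_opNorm {m n : ℕ} (A : Matrix (Fin m) (Fin n) ℝ) : specNorm A = ‖A‖ := by
  rw [l2_opNorm_def, ← ContinuousLinearMap.sSup_unitClosedBall_eq_norm]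
  refine congrArg sSup (Set.ext fun c => ⟨?_, ?_⟩)
  · rintro ⟨x, hx, rfl⟩
    refine ⟨toLp 2 x, ?_, ?_⟩
    · simpa [EuclideanSpace.norm_eq] using hx
    · simp [EuclideanSpace.norm_eq, Matrix.toLpLin_toLp]
  · rintro ⟨x, hx, rfl⟩
    refine ⟨x.ofLp, ?_, ?_⟩
    · simpa [EuclideanSpace.norm_eq] using hx
    · simp [EuclideanSpace.norm_eq]

variable {m n : Type*} [Fintype m] [Fintype n] [DecidableEq n]

lemma norm_toLp_mulVec_le (A : Matrix m n ℝ) (x : n → ℝ) :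
    ‖toLp 2 (A *ᵥ x)‖ ≤ ‖A‖ * ‖toLp 2 x‖ :=
  l2_opNorm_mulVec A (toLp 2 x)

lemma l2_opNorm_le_of_forall_norm_mulVec_le (A : Matrix m n ℝ) {c : ℝ} (hc : 0 ≤ c)
    (h : ∀ x : n → ℝ, ‖toLp 2 (A *ᵥ x)‖ ≤ c * ‖toLp 2 x‖) : ‖A‖ ≤ c :=
  ContinuousLinearMap.opNorm_le_bound _ hc fun x => h x.ofLp

lemma l2_opNorm_transpose [DecidableEq m] (A : Matrix m n ℝ) : ‖Aᵀ‖ = ‖A‖ := by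
  rw [← conjTranspose_eq_transpose_of_trivial, l2_opNorm_conjTranspose]

lemma l2_opNorm_vecMulVec (a : m → ℝ) (b : n → ℝ) :
    ‖vecMulVec a b‖ = ‖toLp 2 a‖ * ‖toLp 2 b‖ := by
  classical
  rw [← InnerProductSpace.norm_rankOne (𝕜 := ℝ) (toLp 2 a) (toLp 2 b), l2_opNorm_def]
  congr 1
  ext x i
  simp [vecMulVec_mulVec, dotProduct, PiLp.inner_apply, mul_comm]

lemma sum_sq_col_le_l2_opNorm_sq (A : Matrix m n ℝ) (j : n) : ∑ i, A i j ^ 2 ≤ ‖A‖ ^ 2 := by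
  have h := norm_toLp_mulVec_le A (Pi.single j 1)
  rw [PiLp.toLp_single, PiLp.norm_single, norm_one, mul_one] at h
  calc ∑ i, A i j ^ 2 = ‖toLp 2 (A *ᵥ Pi.single j 1)‖ ^ 2 := by
        simp [EuclideanSpace.real_norm_sq_eq]
    _ ≤ ‖A‖ ^ 2 := by gcongr

lemma sum_sq_row_le_l2_opNorm_sq (A : Matrix m n ℝ) (i : m) : ∑ j, A i j ^ 2 ≤ ‖A‖ ^ 2 := by
  classical
  simpa only [l2_opNorm_transpose, transpose_apply] using sum_sq_col_le_l2_opNorm_sq Aᵀ i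

lemma sq_entry_le_l2_opNorm_sq (A : Matrix m n ℝ) (i : m) (j : n) : A i j ^ 2 ≤ ‖A‖ ^ 2 :=
  (Finset.single_le_sum (f := fun i => A i j ^ 2) (fun _ _ => sq_nonneg _)
    (Finset.mem_univ i)).trans (sum_sq_col_le_l2_opNorm_sq A j)

lemma l2_opNorm_le_of_schur {C P Q : Matrix m n ℝ} {a b : ℝ} (ha : 0 ≤ a) (hb : 0 ≤ b)
    (hP : ∀ i j, 0 ≤ P i j) (hQ : ∀ i j, 0 ≤ Q i j) (hC : ∀ i j, C i j ^ 2 ≤ P i j * Q i j)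
    (hrow : ∀ i, ∑ j, P i j ≤ a ^ 2) (hcol : ∀ j, ∑ i, Q i j ≤ b ^ 2) : ‖C‖ ≤ a * b := by
  refine l2_opNorm_le_of_forall_norm_mulVec_le C (mul_nonneg ha hb) fun x => ?_
  have hentry (i : m) : (C *ᵥ x) i ^ 2 ≤ a ^ 2 * ∑ j, Q i j * x j ^ 2 :=
    calc (C *ᵥ x) i ^ 2 ≤ (∑ j, P i j) * ∑ j, Q i j * x j ^ 2 :=
          Finset.sum_sq_le_sum_mul_sum_of_sq_le_mul _ (fun j _ => hP i j)
            (fun j _ => mul_nonneg (hQ i j) (sq_nonneg _)) fun j _ => by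
              rw [mul_pow, ← mul_assoc]
              exact mul_le_mul_of_nonneg_right (hC i j) (sq_nonneg _)
      _ ≤ a ^ 2 * ∑ j, Q i j * x j ^ 2 :=
          mul_le_mul_of_nonneg_right (hrow i)
            (Finset.sum_nonneg fun j _ => mul_nonneg (hQ i j) (sq_nonneg _))
  refine le_of_sq_le_sq ?_ (by positivity)
  calc ‖toLp 2 (C *ᵥ x)‖ ^ 2 = ∑ i, (C *ᵥ x) i ^ 2 := EuclideanSpace.real_norm_sq_eq _
    _ ≤ ∑ i, a ^ 2 * ∑ j, Q i j * x j ^ 2 := Finset.sum_le_sum fun i _ => hentry i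
    _ = a ^ 2 * ∑ j, (∑ i, Q i j) * x j ^ 2 := by
        rw [← Finset.mul_sum, Finset.sum_comm]; simp only [Finset.sum_mul]
    _ ≤ a ^ 2 * ∑ j, b ^ 2 * x j ^ 2 := by gcongr with j; exact hcol j
    _ = (a * b * ‖toLp 2 x‖) ^ 2 := by
        rw [← Finset.mul_sum, mul_pow, mul_pow, EuclideanSpace.real_norm_sq_eq, mul_assoc]

end OperatorNorm

section RankOne

variable {m n : Type*} [Fintype m] [Fintype n]

/-- The factor `(b − T u)(u + Tᵀ b)ᵀ` of an Oja step on the tangent `T`, where `u = ȳ` and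
`b = y̲`. -/
def tangentDirection (T : Matrix m n ℝ) (b : m → ℝ) (u : n → ℝ) : Matrix m n ℝ :=
  vecMulVec (b - T *ᵥ u) (u + b ᵥ* T)

lemma continuous_tangentDirection (T : Matrix m n ℝ) :
    Continuous fun x : (m → ℝ) × (n → ℝ) => tangentDirection T x.1 x.2 :=
  (continuous_fst.sub (continuous_const.matrix_mulVec continuous_snd)).matrix_vecMulVec
    (continuous_snd.add (continuous_fst.matrix_vecMul continuous_const))

lemma real_inner_toLp (x y : n → ℝ) : inner ℝ (toLp 2 x) (toLp 2 y) = x ⬝ᵥ y := by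
  rw [EuclideanSpace.inner_toLp_toLp, star_trivial, dotProduct_comm]

variable [DecidableEq n]

lemma norm_toLp_vecMul_le (x : m → ℝ) (A : Matrix m n ℝ) :
    ‖toLp 2 (x ᵥ* A)‖ ≤ ‖toLp 2 x‖ * ‖A‖ := by
  classical
  simpa only [mulVec_transpose, l2_opNorm_transpose, mul_comm] using norm_toLp_mulVec_le Aᵀ x

lemma l2_opNorm_vecMulVec_self_sub_le {y : n → ℝ} {c : ℝ} (hy : ‖toLp 2 y‖ ^ 2 ≤ c) :
    ‖vecMulVec y y - (c / 2) • (1 : Matrix n n ℝ)‖ ≤ c / 2 := by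
  have hc : 0 ≤ c := (sq_nonneg _).trans hy
  refine l2_opNorm_le_of_forall_norm_mulVec_le _ (by positivity) fun x => ?_
  refine le_of_sq_le_sq ?_ (by positivity)
  have hsplit : toLp 2 ((vecMulVec y y - (c / 2) • (1 : Matrix n n ℝ)) *ᵥ x) =
      (y ⬝ᵥ x) • toLp 2 y - (c / 2) • toLp 2 x := by
    ext i
    simp [sub_mulVec, vecMulVec_mulVec, smul_mulVec, mul_comm]
  calc ‖toLp 2 ((vecMulVec y y - (c / 2) • (1 : Matrix n n ℝ)) *ᵥ x)‖ ^ 2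
      = (y ⬝ᵥ x) ^ 2 * (‖toLp 2 y‖ ^ 2 - c) + (c / 2 * ‖toLp 2 x‖) ^ 2 := by
        rw [hsplit, norm_sub_sq_real, norm_smul, norm_smul, inner_smul_left, inner_smul_right,
          real_inner_toLp, mul_pow, mul_pow, Real.norm_eq_abs, Real.norm_eq_abs, sq_abs, sq_abs,
          conj_trivial]
        ring
    _ ≤ (c / 2 * ‖toLp 2 x‖) ^ 2 :=
        add_le_of_nonpos_left (mul_nonpos_of_nonneg_of_nonpos (sq_nonneg _) (sub_nonpos.2 hy))

-- In `bbᵀT − Tuuᵀ` the shifts by `c / 2` cancel, and each shifted factor has norm only `c / 2`;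
-- this gives `c‖T‖` where the triangle inequality alone would give `2c‖T‖`.
lemma l2_opNorm_vecMulVec_mul_sub_mul_vecMulVec_le {b : m → ℝ} {u : n → ℝ} {c : ℝ}
    (hb : ‖toLp 2 b‖ ^ 2 ≤ c) (hu : ‖toLp 2 u‖ ^ 2 ≤ c) (T : Matrix m n ℝ) :
    ‖vecMulVec b b * T - T * vecMulVec u u‖ ≤ c * ‖T‖ := by
  classical
  calc ‖vecMulVec b b * T - T * vecMulVec u u‖
      = ‖(vecMulVec b b - (c / 2) • 1) * T - T * (vecMulVec u u - (c / 2) • 1)‖ := by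
        congr 1
        simp [Matrix.sub_mul, Matrix.mul_sub]
    _ ≤ ‖vecMulVec b b - (c / 2) • 1‖ * ‖T‖ + ‖T‖ * ‖vecMulVec u u - (c / 2) • 1‖ :=
        (norm_sub_le _ _).trans (add_le_add (l2_opNorm_mul _ _) (l2_opNorm_mul _ _))
    _ ≤ c / 2 * ‖T‖ + ‖T‖ * (c / 2) := by
        gcongr
        exacts [l2_opNorm_vecMulVec_self_sub_le hb, l2_opNorm_vecMulVec_self_sub_le hu]
    _ = c * ‖T‖ := by ring

lemma norm_tangentDirection_sub_vecMulVec_le {b : m → ℝ} {u : n → ℝ} {α β c : ℝ}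
    (hb : ‖toLp 2 b‖ ≤ β) (hu : ‖toLp 2 u‖ ≤ α) (hβ : β ^ 2 ≤ c) (hα : α ^ 2 ≤ c)
    (T : Matrix m n ℝ) :
    ‖tangentDirection T b u - vecMulVec b u‖ ≤ c * ‖T‖ + α * β * ‖T‖ ^ 2 := by
  have hexpand : tangentDirection T b u - vecMulVec b u =
      vecMulVec b b * T - T * vecMulVec u u - vecMulVec (T *ᵥ u) (b ᵥ* T) := by
    rw [tangentDirection, vecMulVec_mul, mul_vecMulVec, sub_vecMulVec, vecMulVec_add,
      vecMulVec_add]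
    abel
  have hα0 : 0 ≤ α := (norm_nonneg _).trans hu
  have hquad : ‖vecMulVec (T *ᵥ u) (b ᵥ* T)‖ ≤ α * β * ‖T‖ ^ 2 :=
    calc ‖vecMulVec (T *ᵥ u) (b ᵥ* T)‖ = ‖toLp 2 (T *ᵥ u)‖ * ‖toLp 2 (b ᵥ* T)‖ :=
          l2_opNorm_vecMulVec _ _
      _ ≤ (‖T‖ * ‖toLp 2 u‖) * (‖toLp 2 b‖ * ‖T‖) := by
          gcongr
          exacts [norm_toLp_mulVec_le T u, norm_toLp_vecMul_le b T]
      _ ≤ (‖T‖ * α) * (β * ‖T‖) := by gcongr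
      _ = α * β * ‖T‖ ^ 2 := by ring
  rw [hexpand]
  refine (norm_sub_le _ _).trans (add_le_add ?_ hquad)
  exact l2_opNorm_vecMulVec_mul_sub_mul_vecMulVec_le ((by gcongr : _ ≤ β ^ 2).trans hβ)
    ((by gcongr : _ ≤ α ^ 2).trans hα) T

end RankOne

section RankOneUpdate

variable {K m n : Type*} [Field K] [Fintype n] [DecidableEq n]

lemma isUnit_add_vecMulVec {U : Matrix n n K} (hU : IsUnit U) {u z : n → K}
    (h : 1 + z ⬝ᵥ U⁻¹ *ᵥ u ≠ 0) : IsUnit (U + vecMulVec u z) := by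
  rw [isUnit_iff_isUnit_det] at hU ⊢
  rw [vecMulVec_eq Unit, det_add_replicateCol_mul_replicateRow hU]
  refine hU.mul (isUnit_iff_ne_zero.2 ?_)
  rwa [det_unique, Matrix.mul_assoc, ← replicateCol_mulVec, Matrix.add_apply, one_apply_eq,
    replicateRow_mul_replicateCol_apply]

lemma add_vecMulVec_mul_inv_sub {U : Matrix n n K} (hU : IsUnit U) (B : Matrix m n K)
    {u z : n → K} (b : m → K) (h : 1 + z ⬝ᵥ U⁻¹ *ᵥ u ≠ 0) :
    (B + vecMulVec b z) * (U + vecMulVec u z)⁻¹ - B * U⁻¹ =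
      (1 + z ⬝ᵥ U⁻¹ *ᵥ u)⁻¹ • vecMulVec (b - (B * U⁻¹) *ᵥ u) (z ᵥ* U⁻¹) := by
  have hUdet : IsUnit U.det := (isUnit_iff_isUnit_det U).1 hU
  have hdet : IsUnit (U + vecMulVec u z).det :=
    (isUnit_iff_isUnit_det _).1 (isUnit_add_vecMulVec hU h)
  have hrow : (z ᵥ* U⁻¹) ᵥ* (U + vecMulVec u z) = (1 + z ⬝ᵥ U⁻¹ *ᵥ u) • z := by
    rw [vecMul_add, vecMul_vecMul, nonsing_inv_mul U hUdet, vecMul_one, vecMul_vecMulVec,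
      ← dotProduct_mulVec, add_smul, one_smul]
  have hcancel : (B * U⁻¹ + (1 + z ⬝ᵥ U⁻¹ *ᵥ u)⁻¹ •
      vecMulVec (b - (B * U⁻¹) *ᵥ u) (z ᵥ* U⁻¹)) * (U + vecMulVec u z) = B + vecMulVec b z := by
    rw [Matrix.add_mul, smul_mul, vecMulVec_mul, hrow, vecMulVec_smul, inv_smul_smul₀ h,
      Matrix.mul_add, nonsing_inv_mul_cancel_right _ _ hUdet, mul_vecMulVec, sub_vecMulVec]
    abel
  rw [sub_eq_iff_eq_add', ← hcancel, mul_nonsing_inv_cancel_right _ _ hdet]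

end RankOneUpdate

section Graph

variable {m n : Type*} [Fintype m] [Fintype n] [DecidableEq n]

lemma norm_inv_mulVec_le {U : Matrix n n ℝ} {B : Matrix m n ℝ}
    (horth : Uᵀ * U + Bᵀ * B = 1) (hU : IsUnit U) (u : n → ℝ) :
    ‖toLp 2 (U⁻¹ *ᵥ u)‖ ≤ √(1 + ‖B * U⁻¹‖ ^ 2) * ‖toLp 2 u‖ := by
  set v := U⁻¹ *ᵥ u with hv
  have hUv : U *ᵥ v = u := by
    rw [hv, mulVec_mulVec, mul_nonsing_inv _ ((isUnit_iff_isUnit_det U).1 hU), one_mulVec]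
  have hBv : B *ᵥ v = (B * U⁻¹) *ᵥ u := by rw [hv, mulVec_mulVec]
  have hpyth : ‖toLp 2 v‖ ^ 2 = ‖toLp 2 (U *ᵥ v)‖ ^ 2 + ‖toLp 2 (B *ᵥ v)‖ ^ 2 := by
    simp only [← real_inner_self_eq_norm_sq, real_inner_toLp]
    calc v ⬝ᵥ v = v ⬝ᵥ (Uᵀ * U + Bᵀ * B) *ᵥ v := by rw [horth, one_mulVec]
      _ = U *ᵥ v ⬝ᵥ U *ᵥ v + B *ᵥ v ⬝ᵥ B *ᵥ v := by
        simp only [add_mulVec, dotProduct_add, ← mulVec_mulVec, dotProduct_mulVec, vecMul_transpose]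
  refine le_of_sq_le_sq ?_ (by positivity)
  calc ‖toLp 2 v‖ ^ 2 = ‖toLp 2 u‖ ^ 2 + ‖toLp 2 ((B * U⁻¹) *ᵥ u)‖ ^ 2 := by rw [hpyth, hUv, hBv]
    _ ≤ ‖toLp 2 u‖ ^ 2 + (‖B * U⁻¹‖ * ‖toLp 2 u‖) ^ 2 := by
        gcongr; exact norm_toLp_mulVec_le _ u
    _ = (√(1 + ‖B * U⁻¹‖ ^ 2) * ‖toLp 2 u‖) ^ 2 := by
        rw [mul_pow, mul_pow, Real.sq_sqrt (by positivity)]; ring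

lemma abs_dotProduct_inv_mulVec_le {U : Matrix n n ℝ} {B : Matrix m n ℝ}
    (horth : Uᵀ * U + Bᵀ * B = 1) (hU : IsUnit U) (z u : n → ℝ) :
    |z ⬝ᵥ U⁻¹ *ᵥ u| ≤ ‖toLp 2 z‖ * (√(1 + ‖B * U⁻¹‖ ^ 2) * ‖toLp 2 u‖) := by
  rw [← real_inner_toLp]
  exact (abs_real_inner_le_norm _ _).trans (by gcongr; exact norm_inv_mulVec_le horth hU u)

end Graph

section Covariance

variable {Ω : Type*} [MeasurableSpace Ω] {μ : Measure Ω}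

lemma sq_covariance_le_variance_mul_variance [IsFiniteMeasure μ] {f g : Ω → ℝ}
    (hf : MemLp f 2 μ) (hg : MemLp g 2 μ) : cov[f, g; μ] ^ 2 ≤ Var[f; μ] * Var[g; μ] := by
  have hquad (t : ℝ) : 0 ≤ Var[f; μ] * (t * t) + 2 * cov[f, g; μ] * t + Var[g; μ] := by
    have h := variance_nonneg (t • f + g) μ
    rw [variance_add (hf.const_smul t) hg, variance_smul, covariance_smul_left] at h
    linarith
  have hdiscrim := discrim_le_zero hquad
  rw [discrim] at hdiscrim
  linarith

variable [IsProbabilityMeasure μ]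

lemma sum_variance_le {ι : Type*} [Fintype ι] {f : ι → Ω → ℝ} (hf : ∀ i, MemLp (f i) 2 μ) {c : ℝ}
    (hc : ∀ᵐ ω ∂μ, ∑ i, f i ω ^ 2 ≤ c) : ∑ i, Var[f i; μ] ≤ c :=
  calc ∑ i, Var[f i; μ] ≤ ∑ i, ∫ ω, f i ω ^ 2 ∂μ :=
        Finset.sum_le_sum fun i _ => variance_le_expectation_sq (hf i).aestronglyMeasurable
    _ = ∫ ω, ∑ i, f i ω ^ 2 ∂μ := (integral_finsetSum _ fun i _ => (hf i).integrable_sq).symm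
    _ ≤ ∫ _, c ∂μ :=
        integral_mono_ae (integrable_finsetSum _ fun i _ => (hf i).integrable_sq)
          (integrable_const c) hc
    _ = c := by simp

end Covariance

section HadamardCovariance

variable {Ω m n : Type*} [MeasurableSpace Ω]

/-- The entrywise (Hadamard) covariance `E[(X − EX) ∘ (Z − EZ)]` of two random matrices. -/
noncomputable def hadamardCov (μ : Measure Ω) (X Z : Ω → Matrix m n ℝ) : Matrix m n ℝ :=
  of fun i j => cov[fun ω => X ω i j, fun ω => Z ω i j; μ]

/-- The entrywise (Hadamard) variance `var∘(X) = E[(X − EX) ∘ (X − EX)]` of a random matrix, as a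
matrix of Bochner integrals. -/
noncomputable def hadamardVar (μ : Measure Ω) (X : Ω → Matrix m n ℝ) : Matrix m n ℝ :=
  of fun i j => ∫ ω, (X ω i j - ∫ ω', X ω' i j ∂μ) ^ 2 ∂μ

variable {μ : Measure Ω}

lemma hadamardCov_self (X : Ω → Matrix m n ℝ) : hadamardCov μ X X = hadamardVar μ X := by
  ext i j
  simp only [hadamardCov, hadamardVar, of_apply, covariance, sq]

lemma hadamardVar_congr_ae {X Z : Ω → Matrix m n ℝ} (h : X =ᵐ[μ] Z) :
    hadamardVar μ X = hadamardVar μ Z := by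
  ext i j
  have hij : (fun ω => X ω i j) =ᵐ[μ] fun ω => Z ω i j := h.mono fun ω hω => congr_fun₂ hω i j
  simp only [hadamardVar, of_apply, integral_congr_ae hij]
  exact integral_congr_ae (hij.mono fun ω hω => by simp only [hω])

lemma hadamardVar_const_smul (c : ℝ) (X : Ω → Matrix m n ℝ) :
    hadamardVar μ (fun ω => c • X ω) = c ^ 2 • hadamardVar μ X := by
  ext i j
  simp only [← hadamardCov_self, hadamardCov, of_apply, Matrix.smul_apply, smul_eq_mul,
    covariance_const_mul_left, covariance_const_mul_right, sq, mul_assoc]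

variable [Fintype m] [Fintype n] [DecidableEq n] {X Z : Ω → Matrix m n ℝ}

lemma memLp_entry [IsFiniteMeasure μ] (hX : AEStronglyMeasurable X μ) {a : ℝ}
    (ha : ∀ᵐ ω ∂μ, ‖X ω‖ ≤ a) (i : m) (j : n) : MemLp (fun ω => X ω i j) 2 μ := by
  refine MemLp.of_bound ((continuous_apply_apply i j).comp_aestronglyMeasurable hX) a ?_
  filter_upwards [ha] with ω hω
  exact (abs_le_of_sq_le_sq (sq_entry_le_l2_opNorm_sq (X ω) i j) (norm_nonneg _)).trans hω

variable [IsProbabilityMeasure μ] {a b : ℝ}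

lemma hadamardVar_add (hX : AEStronglyMeasurable X μ) (hZ : AEStronglyMeasurable Z μ)
    (ha : ∀ᵐ ω ∂μ, ‖X ω‖ ≤ a) (hb : ∀ᵐ ω ∂μ, ‖Z ω‖ ≤ b) :
    hadamardVar μ (X + Z) = hadamardVar μ X + (2 : ℝ) • hadamardCov μ X Z + hadamardVar μ Z := by
  ext i j
  have hXij := memLp_entry hX ha i j
  have hZij := memLp_entry hZ hb i j
  have hvar := variance_add hXij hZij
  simp only [← covariance_self, hXij.aemeasurable, hZij.aemeasurable,
    (hXij.add hZij).aemeasurable] at hvar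
  simp only [← hadamardCov_self]
  exact hvar

lemma norm_hadamardCov_le (hX : AEStronglyMeasurable X μ) (hZ : AEStronglyMeasurable Z μ)
    (ha : ∀ᵐ ω ∂μ, ‖X ω‖ ≤ a) (hb : ∀ᵐ ω ∂μ, ‖Z ω‖ ≤ b) : ‖hadamardCov μ X Z‖ ≤ a * b := by
  obtain ⟨ω, haω, hbω⟩ := (ha.and hb).exists
  have hXij := memLp_entry hX ha
  have hZij := memLp_entry hZ hb
  refine l2_opNorm_le_of_schur ((norm_nonneg _).trans haω) ((norm_nonneg _).trans hbω)
    (P := of fun i j => Var[fun ω => X ω i j; μ]) (Q := of fun i j => Var[fun ω => Z ω i j; μ])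
    (fun i j => variance_nonneg _ _) (fun i j => variance_nonneg _ _)
    (fun i j => sq_covariance_le_variance_mul_variance (hXij i j) (hZij i j))
    (fun i => sum_variance_le (hXij i) (ha.mono fun ω hω => ?_))
    (fun j => sum_variance_le (fun i => hZij i j) (hb.mono fun ω hω => ?_))
  · exact (sum_sq_row_le_l2_opNorm_sq (X ω) i).trans (by gcongr)
  · exact (sum_sq_col_le_l2_opNorm_sq (Z ω) j).trans (by gcongr)

lemma norm_hadamardVar_sub_le (hX : AEStronglyMeasurable X μ) (hZ : AEStronglyMeasurable Z μ)
    (ha : ∀ᵐ ω ∂μ, ‖X ω‖ ≤ a) (hb : ∀ᵐ ω ∂μ, ‖Z ω - X ω‖ ≤ b) :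
    ‖hadamardVar μ Z - hadamardVar μ X‖ ≤ 2 * (a * b) + b ^ 2 := by
  have hD : AEStronglyMeasurable (Z - X) μ := hZ.sub hX
  calc ‖hadamardVar μ Z - hadamardVar μ X‖
      = ‖(2 : ℝ) • hadamardCov μ X (Z - X) + hadamardVar μ (Z - X)‖ := by
        conv_lhs => rw [← add_sub_cancel X Z, hadamardVar_add hX hD ha hb]
        congr 1
        abel
    _ ≤ 2 * ‖hadamardCov μ X (Z - X)‖ + ‖hadamardVar μ (Z - X)‖ := by
        refine (norm_add_le _ _).trans_eq ?_
        rw [norm_smul, Real.norm_ofNat]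
    _ ≤ 2 * (a * b) + b ^ 2 := by
        rw [sq b, ← hadamardCov_self (Z - X)]
        gcongr
        exacts [norm_hadamardCov_le hX hD ha hb, norm_hadamardCov_le hD hD hb hb]

lemma norm_hadamardVar_inv_one_add_smul_sub_le {ξ : Ω → ℝ} {s : ℝ}
    (hX : AEStronglyMeasurable X μ) (hξ : AEStronglyMeasurable ξ μ)
    (ha : ∀ᵐ ω ∂μ, ‖X ω‖ ≤ a) (hs : s ≤ 1 / 2) (hξs : ∀ᵐ ω ∂μ, |ξ ω| ≤ s) :
    ‖hadamardVar μ (fun ω => (1 + ξ ω)⁻¹ • X ω) - hadamardVar μ X‖ ≤ 6 * s * a ^ 2 := by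
  obtain ⟨ω, hω⟩ := hξs.exists
  have hs0 : 0 ≤ s := (abs_nonneg _).trans hω
  have hclose : ∀ᵐ ω ∂μ, ‖(1 + ξ ω)⁻¹ • X ω - X ω‖ ≤ 2 * s * a := by
    filter_upwards [ha, hξs] with ω hω hξω
    have hlow : 1 / 2 ≤ 1 + ξ ω := by linarith [(abs_le.1 hξω).1]
    have hpos : 0 < 1 + ξ ω := by linarith
    have hcoeff : |(1 + ξ ω)⁻¹ - 1| ≤ 2 * s :=
      calc |(1 + ξ ω)⁻¹ - 1| = |ξ ω| / (1 + ξ ω) := by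
            rw [inv_eq_one_div, div_sub_one hpos.ne', abs_div, abs_of_pos hpos,
              sub_add_cancel_left, abs_neg]
        _ ≤ s / (1 / 2) := by gcongr
        _ = 2 * s := by ring
    calc ‖(1 + ξ ω)⁻¹ • X ω - X ω‖ = |(1 + ξ ω)⁻¹ - 1| * ‖X ω‖ := by
          rw [← Real.norm_eq_abs, ← norm_smul, sub_smul, one_smul]
      _ ≤ 2 * s * a := by gcongr
  have hmeas : AEStronglyMeasurable (fun ω => (1 + ξ ω)⁻¹ • X ω) μ :=
    (hξ.const_add 1).inv₀.smul hX
  calc ‖hadamardVar μ (fun ω => (1 + ξ ω)⁻¹ • X ω) - hadamardVar μ X‖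
      ≤ 2 * (a * (2 * s * a)) + (2 * s * a) ^ 2 := norm_hadamardVar_sub_le hX hmeas ha hclose
    _ = (4 * s + 4 * s * s) * a ^ 2 := by ring
    _ ≤ 6 * s * a ^ 2 := by gcongr; nlinarith

end HadamardCovariance

section Tangent

variable {d p : ℕ}

/-- The top `p` entries `ȳ` of a vector in `ℝᵈ`. -/
def topVec (h : p ≤ d) (y : Fin d → ℝ) : Fin p → ℝ :=
  fun i => y (Fin.castLE h i)

/-- The bottom `d − p` entries `y̲` of a vector in `ℝᵈ`. -/
def botVec (p : ℕ) (y : Fin d → ℝ) : Fin (d - p) → ℝ :=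
  fun i => y ⟨p + i, by have := i.isLt; omega⟩

/-- The tangent matrix `T = V̲ V̄⁻¹`, which describes the column space of `V` as a graph over the
first `p` coordinates; it is meaningful only when `V̄` is invertible. -/
noncomputable def tangent (h : p ≤ d) (V : Matrix (Fin d) (Fin p) ℝ) :
    Matrix (Fin (d - p)) (Fin p) ℝ :=
  botBlock V * (topBlock h V)⁻¹

/-- One (unnormalised) Oja step `V⁺ = (1 + η y yᵀ) V`. -/
def ojaStep (η : ℝ) (y : Fin d → ℝ) (V : Matrix (Fin d) (Fin p) ℝ) : Matrix (Fin d) (Fin p) ℝ :=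
  (1 + η • vecMulVec y y) * V

lemma continuous_topVec (h : p ≤ d) : Continuous (topVec h) :=
  continuous_pi fun _ => continuous_apply _

lemma continuous_botVec : Continuous (botVec p : (Fin d → ℝ) → Fin (d - p) → ℝ) :=
  continuous_pi fun _ => continuous_apply _

lemma sum_eq_sum_top_add_sum_bot (h : p ≤ d) (f : Fin d → ℝ) :
    ∑ i, f i = ∑ i, topVec h f i + ∑ i, botVec p f i := by
  rw [← Equiv.sum_comp (finCongr (Nat.add_sub_cancel' h)) f, Fin.sum_univ_add]
  rfl

lemma vecMul_eq_top_add_bot (h : p ≤ d) (y : Fin d → ℝ) (V : Matrix (Fin d) (Fin p) ℝ) :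
    y ᵥ* V = topVec h y ᵥ* topBlock h V + botVec p y ᵥ* botBlock V := by
  ext j
  exact sum_eq_sum_top_add_sum_bot h fun i => y i * V i j

lemma topBlock_transpose_mul_add_botBlock_transpose_mul (h : p ≤ d)
    (V : Matrix (Fin d) (Fin p) ℝ) :
    (topBlock h V)ᵀ * topBlock h V + (botBlock V)ᵀ * botBlock V = Vᵀ * V := by
  ext i j
  exact (sum_eq_sum_top_add_sum_bot h fun k => V k i * V k j).symm

lemma ojaStep_apply (η : ℝ) (y : Fin d → ℝ) (V : Matrix (Fin d) (Fin p) ℝ) :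
    ojaStep η y V = V + vecMulVec (η • y) (y ᵥ* V) := by
  rw [ojaStep, Matrix.add_mul, Matrix.one_mul, smul_mul, vecMulVec_mul, smul_vecMulVec]

lemma tangent_ojaStep_sub_tangent (h : p ≤ d) {V : Matrix (Fin d) (Fin p) ℝ}
    (hV : IsUnit (topBlock h V)) {η : ℝ} {y : Fin d → ℝ}
    (hη : 1 + η * (y ᵥ* V ⬝ᵥ (topBlock h V)⁻¹ *ᵥ topVec h y) ≠ 0) :
    tangent h (ojaStep η y V) - tangent h V =
      η • (1 + η * (y ᵥ* V ⬝ᵥ (topBlock h V)⁻¹ *ᵥ topVec h y))⁻¹ •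
        tangentDirection (tangent h V) (botVec p y) (topVec h y) := by
  have htop : topBlock h (ojaStep η y V) = topBlock h V + vecMulVec (η • topVec h y) (y ᵥ* V) := by
    rw [ojaStep_apply]; rfl
  have hbot : botBlock (ojaStep η y V) = botBlock V + vecMulVec (η • botVec p y) (y ᵥ* V) := by
    rw [ojaStep_apply]; rfl
  have hrow : y ᵥ* V ᵥ* (topBlock h V)⁻¹ = topVec h y + botVec p y ᵥ* tangent h V := by
    rw [vecMul_eq_top_add_bot h, add_vecMul, vecMul_vecMul,
      mul_nonsing_inv _ ((isUnit_iff_isUnit_det _).1 hV), vecMul_one, vecMul_vecMul, tangent]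
  have hpair : y ᵥ* V ⬝ᵥ (topBlock h V)⁻¹ *ᵥ (η • topVec h y) =
      η * (y ᵥ* V ⬝ᵥ (topBlock h V)⁻¹ *ᵥ topVec h y) := by
    rw [mulVec_smul, dotProduct_smul, smul_eq_mul]
  rw [← hpair] at hη ⊢
  rw [tangent, htop, hbot, tangent, add_vecMulVec_mul_inv_sub hV _ _ hη, hrow,
    mulVec_smul (botBlock V * (topBlock h V)⁻¹), ← smul_sub, smul_vecMulVec, smul_comm]
  rfl

end Tangent

section VarianceOfStep

variable {Ω m n : Type*} [MeasurableSpace Ω] {μ : Measure Ω} [IsProbabilityMeasure μ]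
  [Fintype m] [Fintype n] [DecidableEq n]

lemma norm_hadamardVar_inv_one_add_smul_tangentDirection_sub_le {b : Ω → m → ℝ} {u : Ω → n → ℝ}
    {ξ : Ω → ℝ} {α β c s : ℝ} (T : Matrix m n ℝ) (hbm : AEStronglyMeasurable b μ)
    (hum : AEStronglyMeasurable u μ) (hξm : AEStronglyMeasurable ξ μ)
    (hb : ∀ᵐ ω ∂μ, ‖toLp 2 (b ω)‖ ≤ β) (hu : ∀ᵐ ω ∂μ, ‖toLp 2 (u ω)‖ ≤ α)
    (hξ : ∀ᵐ ω ∂μ, |ξ ω| ≤ s) (hs : s ≤ 1 / 2) (hβ : β ^ 2 ≤ c) (hα : α ^ 2 ≤ c) :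
    let δ := c * ‖T‖ + α * β * ‖T‖ ^ 2
    ‖hadamardVar μ (fun ω => (1 + ξ ω)⁻¹ • tangentDirection T (b ω) (u ω)) -
        hadamardVar μ (fun ω => vecMulVec (b ω) (u ω))‖ ≤
      2 * (α * β * δ) + δ ^ 2 + 6 * s * (α * β + δ) ^ 2 := by
  intro δ
  have hleadm : AEStronglyMeasurable (fun ω => vecMulVec (b ω) (u ω)) μ :=
    (continuous_fst.matrix_vecMulVec continuous_snd).comp_aestronglyMeasurable (hbm.prodMk hum)
  have hdirm : AEStronglyMeasurable (fun ω => tangentDirection T (b ω) (u ω)) μ :=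
    (continuous_tangentDirection T).comp_aestronglyMeasurable (hbm.prodMk hum)
  have hlead : ∀ᵐ ω ∂μ, ‖vecMulVec (b ω) (u ω)‖ ≤ α * β := by
    filter_upwards [hb, hu] with ω hbω huω
    rw [l2_opNorm_vecMulVec, mul_comm α]
    exact mul_le_mul hbω huω (norm_nonneg _) ((norm_nonneg _).trans hbω)
  have hdiff : ∀ᵐ ω ∂μ, ‖tangentDirection T (b ω) (u ω) - vecMulVec (b ω) (u ω)‖ ≤ δ := by
    filter_upwards [hb, hu] with ω hbω huω
    exact norm_tangentDirection_sub_vecMulVec_le hbω huω hβ hα T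
  have hdir : ∀ᵐ ω ∂μ, ‖tangentDirection T (b ω) (u ω)‖ ≤ α * β + δ := by
    filter_upwards [hlead, hdiff] with ω hleadω hdiffω
    exact (norm_le_norm_add_norm_sub' _ _).trans (add_le_add hleadω hdiffω)
  rw [add_comm]
  exact (norm_sub_le_norm_sub_add_norm_sub _ _ _).trans
    (add_le_add (norm_hadamardVar_inv_one_add_smul_sub_le hdirm hξm hdir hs hξ)
      (norm_hadamardVar_sub_le hleadm hdirm hlead hdiff))

end VarianceOfStep

theorem norm_hadamardVar_tangent_ojaStep_sub_le {Ω : Type*} [MeasurableSpace Ω] {μ : Measure Ω}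
    [IsProbabilityMeasure μ] {d p : ℕ} (h : p ≤ d) {V : Matrix (Fin d) (Fin p) ℝ}
    (hV : Vᵀ * V = 1) (hVtop : IsUnit (topBlock h V)) {Y : Ω → Fin d → ℝ} (hY : AEMeasurable Y μ)
    {η α β γ c : ℝ} (hη : 0 ≤ η) (hz : ∀ᵐ ω ∂μ, ‖toLp 2 (Y ω ᵥ* V)‖ ≤ γ)
    (hu : ∀ᵐ ω ∂μ, ‖toLp 2 (topVec h (Y ω))‖ ≤ α) (hb : ∀ᵐ ω ∂μ, ‖toLp 2 (botVec p (Y ω))‖ ≤ β)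
    (hβ : β ^ 2 ≤ c) (hα : α ^ 2 ≤ c) :
    let τ := ‖tangent h V‖
    let δ := c * τ + α * β * τ ^ 2
    let s := η * (γ * (√(1 + τ ^ 2) * α))
    s ≤ 1 / 2 →
    ‖hadamardVar μ (fun ω => tangent h (ojaStep η (Y ω) V) - tangent h V) -
        η ^ 2 • hadamardVar μ (fun ω => vecMulVec (botVec p (Y ω)) (topVec h (Y ω)))‖ ≤
      η ^ 2 * (2 * (α * β * δ) + δ ^ 2 + 6 * s * (α * β + δ) ^ 2) := by
  intro τ δ s hs
  let ξ : Ω → ℝ := fun ω => η * (Y ω ᵥ* V ⬝ᵥ (topBlock h V)⁻¹ *ᵥ topVec h (Y ω))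
  have htopm : AEStronglyMeasurable (fun ω => topVec h (Y ω)) μ :=
    (continuous_topVec h).comp_aestronglyMeasurable hY.aestronglyMeasurable
  have hbotm : AEStronglyMeasurable (fun ω => botVec p (Y ω)) μ :=
    continuous_botVec.comp_aestronglyMeasurable hY.aestronglyMeasurable
  have hξm : AEStronglyMeasurable ξ μ := by
    have hξc : Continuous fun y : Fin d → ℝ =>
        η * (y ᵥ* V ⬝ᵥ (topBlock h V)⁻¹ *ᵥ topVec h y) :=
      continuous_const.mul ((continuous_id.matrix_vecMul continuous_const).dotProduct
        (continuous_const.matrix_mulVec (continuous_topVec h)))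
    exact hξc.comp_aestronglyMeasurable hY.aestronglyMeasurable
  have hξ : ∀ᵐ ω ∂μ, |ξ ω| ≤ s := by
    have horth := (topBlock_transpose_mul_add_botBlock_transpose_mul h V).trans hV
    filter_upwards [hz, hu] with ω hzω huω
    rw [abs_mul, abs_of_nonneg hη]
    refine mul_le_mul_of_nonneg_left ?_ hη
    exact (abs_dotProduct_inv_mulVec_le horth hVtop _ _).trans
      (mul_le_mul hzω (mul_le_mul_of_nonneg_left huω (Real.sqrt_nonneg _)) (by positivity)
        ((norm_nonneg _).trans hzω))
  have hstep : (fun ω => tangent h (ojaStep η (Y ω) V) - tangent h V) =ᵐ[μ] fun ω =>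
      η • (1 + ξ ω)⁻¹ • tangentDirection (tangent h V) (botVec p (Y ω)) (topVec h (Y ω)) := by
    filter_upwards [hξ] with ω hξω
    refine tangent_ojaStep_sub_tangent h hVtop (ne_of_gt ?_)
    linarith [(abs_le.1 hξω).1]
  rw [hadamardVar_congr_ae hstep, hadamardVar_const_smul, ← smul_sub, norm_smul, norm_pow,
    Real.norm_eq_abs, sq_abs]
  gcongr
  exact norm_hadamardVar_inv_one_add_smul_tangentDirection_sub_le _ hbotm htopm hξm hb hu
    hξ hs hβ hα

lemma variance_bound_le {q r k τ s η : ℝ} (hr : 0 < r) (hrk : r ≤ k) (hs : 0 ≤ s) :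
    η ^ 2 * (2 * (q * r * (q * k * τ + q * r * τ ^ 2)) + (q * k * τ + q * r * τ ^ 2) ^ 2 +
        6 * s * (q * r + (q * k * τ + q * r * τ ^ 2)) ^ 2) ≤
      2 * k * r * q ^ 2 * η ^ 2 * τ * (1 + (1 + k / r) * τ + τ ^ 2 + τ ^ 3 / 2) +
        8 * s * η ^ 2 * (r * q * (1 + τ ^ 2 + k / r * τ)) ^ 2 := by
  have hkr : r * (k / r) = k := mul_div_cancel₀ k hr.ne'
  have hscale : r * q * (1 + τ ^ 2 + k / r * τ) = q * r + (q * k * τ + q * r * τ ^ 2) := by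
    linear_combination q * τ * hkr
  have hmain : 2 * k * r * q ^ 2 * η ^ 2 * τ * (1 + (1 + k / r) * τ + τ ^ 2 + τ ^ 3 / 2) =
      η ^ 2 * (q ^ 2 * (2 * k * r * τ + 2 * k * r * τ ^ 2 + 2 * k ^ 2 * τ ^ 2 +
        2 * k * r * τ ^ 3 + k * r * τ ^ 4)) := by
    linear_combination 2 * k * q ^ 2 * η ^ 2 * τ ^ 2 * hkr
  rw [hmain, hscale, ← sub_nonneg]
  have : 0 ≤ k - r := sub_nonneg.2 hrk
  have hgap : 0 ≤ η ^ 2 * (q ^ 2 *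
      (2 * r * (k - r) * τ ^ 2 + k ^ 2 * τ ^ 2 + r * (k - r) * τ ^ 4) +
        2 * s * (q * r + (q * k * τ + q * r * τ ^ 2)) ^ 2) := by positivity
  linarith

lemma norm_toLp_le_sqrt_sum_mul {ι : Type*} [Fintype ι] {x l : ι → ℝ} {m : ℝ}
    (hlm : ∀ i, 0 ≤ l i * m) (hx : ∀ i, |x i| ≤ √(l i * m)) :
    ‖toLp 2 x‖ ≤ √((∑ i, l i) * m) := by
  rw [EuclideanSpace.norm_eq, Finset.sum_mul]
  gcongr with i
  exact (sq_le_sq₀ (norm_nonneg _) (Real.sqrt_nonneg _)).2 (hx i) |>.trans_eq (Real.sq_sqrt (hlm i))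

lemma norm_toLp_vecMul_eq_sqrt {m n : Type*} [Fintype m] [Fintype n] (y : m → ℝ)
    (V : Matrix m n ℝ) : ‖toLp 2 (y ᵥ* V)‖ = √(∑ j, (∑ i, V i j * y i) ^ 2) := by
  simp only [EuclideanSpace.norm_eq, Real.norm_eq_abs, sq_abs, vecMul, dotProduct, mul_comm]

theorem oja_one_step_variance_remainder_general {Ω : Type*} [MeasurableSpace Ω] (μ : Measure Ω)
    [IsProbabilityMeasure μ] {d p : ℕ} (hpd : p ≤ d) {V : Matrix (Fin d) (Fin p) ℝ}
    (hV : Vᵀ * V = 1) (hVtop : IsUnit (topBlock hpd V)) {Y : Ω → Fin d → ℝ}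
    (hY : AEMeasurable Y μ) {η m κ L R : ℝ} (hη : 0 ≤ η) (hm : 0 ≤ m) (hL : 0 < L) (hR : 0 < R)
    (hbd : ∀ᵐ ω ∂μ, ‖toLp 2 (Y ω ᵥ* V)‖ ≤ √(L * m) ∧ ‖toLp 2 (topVec hpd (Y ω))‖ ≤ √(L * m) ∧
      ‖toLp 2 (botVec p (Y ω))‖ ≤ √(R * m)) :
    let ν := R / L
    let ν₁ := max 1 ν
    let T := tangent hpd V
    let τ := specNorm T
    τ ≤ κ →
    2 * L * √(κ ^ 2 + 1) * m * η ≤ 1 →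
    specNorm (hadamardVar μ (fun ω => tangent hpd (ojaStep η (Y ω) V) - T) -
        η ^ 2 • hadamardVar μ (fun ω => vecMulVec (botVec p (Y ω)) (topVec hpd (Y ω)))) ≤
      2 * ν₁ * √ν * L ^ 2 * m ^ 2 * η ^ 2 * τ * (1 + (1 + ν₁ / √ν) * τ + τ ^ 2 + τ ^ 3 / 2) +
        8 * ν * L ^ 3 * m ^ 3 * η ^ 3 * √(1 + τ ^ 2) * (1 + τ ^ 2 + ν₁ / √ν * τ) ^ 2 := by
  intro ν ν₁ T τ hτ hstep
  have hτT : τ = ‖T‖ := specNorm_eq_l2_opNorm T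
  have hτ0 : 0 ≤ τ := hτT ▸ norm_nonneg _
  have hν : 0 < ν := div_pos hR hL
  have hRν : R * m = ν * (L * m) := by rw [← mul_assoc, div_mul_cancel₀ R hL.ne']
  have hq : 0 ≤ L * m := by positivity
  have hβ : √(R * m) ^ 2 ≤ L * m * ν₁ := by
    rw [hRν, Real.sq_sqrt (by positivity), mul_comm]
    gcongr
    exact le_max_right 1 ν
  have hα : √(L * m) ^ 2 ≤ L * m * ν₁ := by
    rw [Real.sq_sqrt hq]
    exact le_mul_of_one_le_right hq (le_max_left 1 ν)
  have hαβ : √(L * m) * √(R * m) = L * m * √ν := by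
    rw [hRν, Real.sqrt_mul hν.le, mul_left_comm, Real.mul_self_sqrt hq, mul_comm]
  have hs : η * (√(L * m) * (√(1 + τ ^ 2) * √(L * m))) = η * (L * m) * √(1 + τ ^ 2) := by
    linear_combination η * √(1 + τ ^ 2) * Real.mul_self_sqrt hq
  have hs_half : η * (L * m) * √(1 + τ ^ 2) ≤ 1 / 2 := by
    have hκ : √(1 + τ ^ 2) ≤ √(κ ^ 2 + 1) := by rw [add_comm]; gcongr
    have := mul_le_mul_of_nonneg_left hκ (mul_nonneg hη hq)
    linarith
  have hcore := norm_hadamardVar_tangent_ojaStep_sub_le hpd hV hVtop hY hη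
    (hbd.mono fun _ h => h.1) (hbd.mono fun _ h => h.2.1) (hbd.mono fun _ h => h.2.2) hβ hα
  simp only [← specNorm_eq_l2_opNorm, hαβ] at hcore
  rw [hs] at hcore
  have hνν₁ : √ν ≤ ν₁ := Real.sqrt_le_iff.2 ⟨by positivity, (le_max_right 1 ν).trans
    (le_self_pow₀ (le_max_left 1 ν) two_ne_zero)⟩
  refine ((hcore hs_half).trans
    (variance_bound_le (Real.sqrt_pos.2 hν) hνν₁ (by positivity))).trans_eq ?_
  linear_combination 8 * L ^ 3 * m ^ 3 * η ^ 3 * √(1 + τ ^ 2) *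
    (1 + τ ^ 2 + ν₁ / √ν * τ) ^ 2 * Real.sq_sqrt hν.le

/-- One-step conditional variance remainder bound (Lemma 3.1, item 4(b)): with
`E[YYᵀ] = Λ`, `H∘ := var∘(Y̲Ȳᵀ)` and `R∘ := var∘(T⁺ − T) − η²H∘`, one has
`‖R∘‖₂ ≤ 2ν₁ν^{1/2}λ_{1∼p}²μ²η²τ(1 + (1+ν₁ν^{-1/2})τ + τ² + τ³/2)
  + 8νλ_{1∼p}³μ³η³(1+τ²)^{1/2}(1 + τ² + ν₁ν^{-1/2}τ)²`. -/
theorem oja_one_step_variance_remainder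
    (Ω : Type) [MeasurableSpace Ω] (μ : Measure Ω) [IsProbabilityMeasure μ]
    (d p : ℕ) (hp : 1 ≤ p) (hpd : p < d)
    (lam : Fin d → ℝ) (hmono : Antitone lam) (hpos : ∀ i, 0 < lam i)
    (V : Matrix (Fin d) (Fin p) ℝ) (hV : Vᵀ * V = 1)
    (hVtop : IsUnit (topBlock hpd.le V))
    (Y : Ω → Fin d → ℝ) (hY : Measurable Y)
    (hcov : ∀ i j, ∫ ω, Y ω i * Y ω j ∂μ = if i = j then lam i else 0)
    (η m κ : ℝ) (hη : 0 < η) (hm : 1 ≤ m) :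
    let lam1p : ℝ := ∑ j : Fin p, lam (Fin.castLE hpd.le j)
    let lamRest : ℝ := ∑ i : Fin (d - p), lam ⟨p + i, by have := i.isLt; omega⟩
    let ν : ℝ := lamRest / lam1p
    let ν₁ : ℝ := max 1 ν
    let T : Matrix (Fin (d - p)) (Fin p) ℝ := botBlock V * (topBlock hpd.le V)⁻¹
    let τ : ℝ := specNorm T
    let Tplus : Ω → Matrix (Fin (d - p)) (Fin p) ℝ := fun ω =>
      botBlock (((1 : Matrix (Fin d) (Fin d) ℝ) + η • Matrix.vecMulVec (Y ω) (Y ω)) * V) *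
        (topBlock hpd.le
          (((1 : Matrix (Fin d) (Fin d) ℝ) + η • Matrix.vecMulVec (Y ω) (Y ω)) * V))⁻¹
    let Hcirc : Matrix (Fin (d - p)) (Fin p) ℝ :=
      Matrix.of fun i j =>
        ∫ ω, (Y ω ⟨p + i, by have := i.isLt; omega⟩ * Y ω (Fin.castLE hpd.le j) -
          ∫ ω', Y ω' ⟨p + i, by have := i.isLt; omega⟩ * Y ω' (Fin.castLE hpd.le j) ∂μ) ^ 2 ∂μ
    let Rcirc : Matrix (Fin (d - p)) (Fin p) ℝ :=
      (Matrix.of fun i j =>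
        ∫ ω, ((Tplus ω - T) i j - ∫ ω', (Tplus ω' - T) i j ∂μ) ^ 2 ∂μ) - η ^ 2 • Hcirc
    τ ≤ κ →
    2 * lam1p * Real.sqrt (κ ^ 2 + 1) * m * η ≤ 1 →
    (∀ᵐ ω ∂μ, Real.sqrt (∑ j : Fin p, (∑ i, V i j * Y ω i) ^ 2) ≤ Real.sqrt (lam1p * m) ∧
      ∀ i, |Y ω i| ≤ Real.sqrt (lam i * m)) →
    specNorm Rcirc ≤
      2 * ν₁ * Real.sqrt ν * lam1p ^ 2 * m ^ 2 * η ^ 2 * τ *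
          (1 + (1 + ν₁ / Real.sqrt ν) * τ + τ ^ 2 + τ ^ 3 / 2) +
        8 * ν * lam1p ^ 3 * m ^ 3 * η ^ 3 * Real.sqrt (1 + τ ^ 2) *
          (1 + τ ^ 2 + ν₁ / Real.sqrt ν * τ) ^ 2 := by
  intro lam1p lamRest ν _ T τ Tplus Hcirc _ hτ hstep hbd
  have : Nonempty (Fin p) := ⟨⟨0, hp⟩⟩
  have : Nonempty (Fin (d - p)) := ⟨⟨0, Nat.sub_pos_of_lt hpd⟩⟩
  have hlm (i : Fin d) : 0 ≤ lam i * m := mul_nonneg (hpos i).le (zero_le_one.trans hm)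
  exact oja_one_step_variance_remainder_general μ hpd.le hV hVtop hY.aemeasurable hη.le
    (zero_le_one.trans hm) (Finset.sum_pos (fun _ _ => hpos _) Finset.univ_nonempty)
    (Finset.sum_pos (fun _ _ => hpos _) Finset.univ_nonempty)
    (hbd.mono fun ω hω => ⟨(norm_toLp_vecMul_eq_sqrt _ _).trans_le hω.1,
      norm_toLp_le_sqrt_sum_mul (fun _ => hlm _) fun _ => hω.2 _,
      norm_toLp_le_sqrt_sum_mul (fun _ => hlm _) fun _ => hω.2 _⟩) hτ hstep
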